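/- Let x_1, …, x_n, x_{n+1} be pairwise distinct real numbers. For r ∈ [n] let x_(r) denote the r-th smallest value of {x_i : i ∈ [n]}, with the conventions x_(0) = −∞ and x_(n+1) = +∞ in the extended reals, and for j ∈ [n] let x_(r)^{j←(n+1)} denote the r-th smallest value of {x_i : i ∈ [n], i ≠ j} ∪ {x_{n+1}}. Then for every r ∈ [n] and j ∈ [n]: |x_(r)^{j←(n+1)} − x_(r)| ≤ max{ x_(r) − x_(r−1), x_(r+1) − x_(r) }, where the inequality is interpreted in the extended reals. -/

import Mathlib

/-!
For every real `a`, the `k`-th smallest element of `s` is at most `a` exactly when at least `k`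
elements of `s` are at most `a`; the conventions `x_(0) = -∞` and `x_(n+1) = +∞` extend this to
every `k`. Adding one point raises such a count by at most one, so the order statistics of `t` and
of `t` with one more point interlace. Going through the points `t` common to both samples, the
`r`-th order statistic after the swap lies between the `(r-1)`-th and the `(r+1)`-th one before it.
-/

open scoped Classical

noncomputable section

/-- The `k`-th smallest element (1-based) of a finite multiset of real numbers
(the `k`-th order statistic). -/
def kth (s : Multiset ℝ) (k : ℕ) : ℝ := (s.sort (· ≤ ·)).getD (k - 1) 0

/-- The `r`-th order statistic of a multiset of `n` reals, as an extended real number, with the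
conventions that the `0`-th order statistic is `-∞` and the `r`-th order statistic is `+∞`
whenever `r` exceeds the number of elements. -/
def kthE (s : Multiset ℝ) (r : ℕ) : EReal :=
  if r = 0 then ⊥ else if r ≤ Multiset.card s then ((kth s r : ℝ) : EReal) else ⊤

theorem getElem_iff_lt_countP_of_pairwise {α : Type*} {p : α → Bool} {l : List α}
    (hl : l.Pairwise fun a b ↦ p b → p a) {k : ℕ} (hk : k < l.length) :
    p l[k] ↔ k < l.countP p := by
  induction l generalizing k with
  | nil => simp at hk
  | cons b t ih =>
    obtain ⟨hb, ht⟩ := List.pairwise_cons.1 hl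
    have countP_eq_zero (hpb : ¬p b) : t.countP p = 0 :=
      List.countP_eq_zero.2 fun c hc hpc ↦ hpb (hb c hc hpc)
    cases k with
    | zero => by_cases hpb : p b <;> simp [hpb, countP_eq_zero]
    | succ k => by_cases hpb : p b <;> simp [hpb, countP_eq_zero, ih ht]

theorem kth_le_iff_le_countP {s : Multiset ℝ} {k : ℕ} (hk : 1 ≤ k) (hks : k ≤ s.card) {a : ℝ} :
    kth s k ≤ a ↔ k ≤ s.countP (· ≤ a) := by
  have sorted : (s.sort (· ≤ ·)).Pairwise fun b c ↦ decide (c ≤ a) → decide (b ≤ a) :=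
    (s.pairwise_sort (· ≤ ·)).imp fun hbc ↦ by simpa only [decide_eq_true_eq] using hbc.trans
  have index_lt_length : k - 1 < (s.sort (· ≤ ·)).length := by rw [Multiset.length_sort]; omega
  have countP_sort : (s.sort (· ≤ ·)).countP (· ≤ a) = s.countP (· ≤ a) := by
    rw [← Multiset.coe_countP, Multiset.sort_eq]
  calc kth s k ≤ a
    _ ↔ (s.sort (· ≤ ·))[k - 1] ≤ a := by rw [kth, List.getD_eq_getElem _ _ index_lt_length]
    _ ↔ k - 1 < (s.sort (· ≤ ·)).countP (· ≤ a) := by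
      simpa only [decide_eq_true_eq] using getElem_iff_lt_countP_of_pairwise sorted index_lt_length
    _ ↔ k ≤ s.countP (· ≤ a) := by rw [countP_sort]; omega

theorem kthE_eq_coe_kth {s : Multiset ℝ} {k : ℕ} (hk : 1 ≤ k) (hks : k ≤ s.card) :
    kthE s k = kth s k := by
  rw [kthE, if_neg (by omega), if_pos hks]

theorem kthE_le_coe_iff_le_countP {s : Multiset ℝ} {k : ℕ} {a : ℝ} :
    kthE s k ≤ a ↔ k ≤ s.countP (· ≤ a) := by
  rcases Nat.eq_zero_or_pos k with rfl | hk
  · simp [kthE]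
  rcases le_or_gt k s.card with hks | hks
  · rw [kthE_eq_coe_kth hk hks, EReal.coe_le_coe_iff, kth_le_iff_le_countP hk hks]
  · have kthE_eq_top : kthE s k = ⊤ := by rw [kthE, if_neg hk.ne', if_neg hks.not_ge]
    simpa [kthE_eq_top] using (s.countP_le_card (· ≤ a)).trans_lt hks

theorem kthE_le_kthE_of_forall_countP {s t : Multiset ℝ} {k m : ℕ}
    (h : ∀ a : ℝ, m ≤ t.countP (· ≤ a) → k ≤ s.countP (· ≤ a)) : kthE s k ≤ kthE t m :=
  EReal.le_of_forall_lt_iff_le.1 fun a ha ↦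
    kthE_le_coe_iff_le_countP.2 (h a (kthE_le_coe_iff_le_countP.1 ha.le))

theorem kthE_anti {s t : Multiset ℝ} (hst : s ≤ t) (k : ℕ) : kthE t k ≤ kthE s k :=
  kthE_le_kthE_of_forall_countP fun _ hk ↦ hk.trans (Multiset.countP_le_of_le _ hst)

theorem kthE_le_kthE_cons_succ (s : Multiset ℝ) (y : ℝ) (k : ℕ) :
    kthE s k ≤ kthE (y ::ₘ s) (k + 1) :=
  kthE_le_kthE_of_forall_countP fun _ hk ↦ by
    rw [Multiset.countP_cons] at hk
    split_ifs at hk <;> omega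

theorem kthE_cons_le_kthE_cons_succ (s : Multiset ℝ) (y z : ℝ) (k : ℕ) :
    kthE (y ::ₘ s) k ≤ kthE (z ::ₘ s) (k + 1) :=
  (kthE_anti (s.le_cons_self y) k).trans (kthE_le_kthE_cons_succ s z k)

theorem coe_abs_sub_le_max_sub_sub {a b : ℝ} {p q : EReal} (hp : p ≤ b) (hq : b ≤ q) :
    ((|b - a| : ℝ) : EReal) ≤ max (a - p) (q - a) := by
  rw [abs_sub_comm, abs_eq_max_neg, neg_sub, EReal.coe_strictMono.monotone.map_max,
    EReal.coe_sub, EReal.coe_sub]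
  exact max_le_max (EReal.sub_le_sub le_rfl hp) (EReal.sub_le_sub hq le_rfl)

theorem order_stat_swap_one_general {s : Multiset ℝ} {y : ℝ} (hy : y ∈ s) (z : ℝ) {r : ℕ}
    (hr : 1 ≤ r) (hrs : r ≤ s.card) :
    ((|kth (z ::ₘ s.erase y) r - kth s r| : ℝ) : EReal)
      ≤ max (kthE s r - kthE s (r - 1)) (kthE s (r + 1) - kthE s r) := by
  obtain ⟨t, rfl⟩ := Multiset.exists_cons_of_mem hy
  rw [Multiset.erase_cons_head, kthE_eq_coe_kth hr hrs]
  have coe_kth : kthE (z ::ₘ t) r = kth (z ::ₘ t) r := kthE_eq_coe_kth hr (by simpa using hrs)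
  apply coe_abs_sub_le_max_sub_sub
  · simpa only [Nat.sub_add_cancel hr, coe_kth] using kthE_cons_le_kthE_cons_succ t y z (r - 1)
  · simpa only [coe_kth] using kthE_cons_le_kthE_cons_succ t z y r

/-- **Order-statistic perturbation bound under swapping one point.**
Let `x 1, …, x n, x (n+1)` be pairwise distinct reals.  For `r, j ∈ [n]`, the `r`-th smallest
value of `{x i : i ∈ [n], i ≠ j} ∪ {x (n+1)}` differs from the `r`-th smallest value `x_(r)` of
`{x i : i ∈ [n]}` by at most `max { x_(r) - x_(r-1), x_(r+1) - x_(r) }`, where `x_(0) = -∞` and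
`x_(n+1) = +∞` in the extended reals. -/
theorem order_stat_swap_one (n : ℕ) (x : ℕ → ℝ)
    (hdist : Set.InjOn x (Set.Icc 1 (n + 1)))
    (r j : ℕ) (hr : r ∈ Finset.Icc 1 n) (hj : j ∈ Finset.Icc 1 n) :
    ((|kth (x (n + 1) ::ₘ Multiset.map x ((Finset.Icc 1 n).erase j).val) r
        - kth (Multiset.map x (Finset.Icc 1 n).val) r| : ℝ) : EReal)
      ≤ max
          (kthE (Multiset.map x (Finset.Icc 1 n).val) r
            - kthE (Multiset.map x (Finset.Icc 1 n).val) (r - 1))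
          (kthE (Multiset.map x (Finset.Icc 1 n).val) (r + 1)
            - kthE (Multiset.map x (Finset.Icc 1 n).val) r) := by
  rw [Finset.erase_val, Multiset.map_erase_of_mem x _ hj]
  exact order_stat_swap_one_general (Multiset.mem_map_of_mem x hj) (x (n + 1))
    (Finset.mem_Icc.1 hr).1 (by simpa using (Finset.mem_Icc.1 hr).2)

end
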